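/- Let N ≥ 2 be an integer, ω > 0, and 1 < p < p_max, and let u be a ground-state profile of (QLS). Then there exists a smooth, compactly supported function ξ : ℝ^N → ℝ with ∫_{ℝ^N} ξ² dx = 1 and ∫_{ℝ^N} (L₊ξ)(x)·ξ(x) dx < 0. (In particular, the first eigenvalue μ₁ = inf σ(L₊) of L₊ is negative.) -/

import Mathlib

open MeasureTheory Real Filter Topology

noncomputable section

/-- Partial derivative along the `i`-th coordinate direction. -/
def pd {N : ℕ} {F : Type*} [NormedAddCommGroup F] [NormedSpace ℝ F]
    (i : Fin N) (f : EuclideanSpace ℝ (Fin N) → F) (x : EuclideanSpace ℝ (Fin N)) : F :=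
  fderiv ℝ f x (EuclideanSpace.single i 1)

/-- Euclidean Laplacian. -/
def lap {N : ℕ} {F : Type*} [NormedAddCommGroup F] [NormedSpace ℝ F]
    (f : EuclideanSpace ℝ (Fin N) → F) (x : EuclideanSpace ℝ (Fin N)) : F :=
  ∑ i : Fin N, pd i (pd i f) x

/-- Squared norm of the gradient of a real-valued function: `|∇f|²`. -/
def gradsq {N : ℕ} (f : EuclideanSpace ℝ (Fin N) → ℝ) (x : EuclideanSpace ℝ (Fin N)) : ℝ :=
  ∑ i : Fin N, (pd i f x) ^ 2

/-- A ground-state profile of the quasilinear Schrödinger equation (QLS)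
`-Δu - uΔ(u²) + ωu - u^p = 0` on `ℝ^N`: smooth, positive, radially symmetric with a
strictly decreasing positive profile, solves (QLS) pointwise, and decays
exponentially together with all its derivatives. -/
structure IsGroundState (N : ℕ) (ω p : ℝ) (u : EuclideanSpace ℝ (Fin N) → ℝ) : Prop where
  smooth : ContDiff ℝ (⊤ : ℕ∞) u
  pos : ∀ x, 0 < u x
  radial : ∃ U : ℝ → ℝ, StrictAntiOn U (Set.Ici 0) ∧ (∀ r, 0 ≤ r → 0 < U r) ∧
      ∀ x, u x = U ‖x‖
  solves : ∀ x, -lap u x - u x * lap (fun y => (u y) ^ 2) x + ω * u x - (u x) ^ p = 0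
  decay : ∀ k : ℕ, ∃ C > 0, ∃ δ > 0, ∀ x,
      ‖iteratedFDeriv ℝ k u x‖ ≤ C * Real.exp (-δ * ‖x‖)

/-- The linearized operator `L₊` around `u` (real-valued functions). -/
def Lplus {N : ℕ} (ω p : ℝ) (u η : EuclideanSpace ℝ (Fin N) → ℝ)
    (x : EuclideanSpace ℝ (Fin N)) : ℝ :=
  -lap η x - 2 * u x * lap (fun y => u y * η y) x + ω * η x
    - (lap (fun y => (u y) ^ 2) x + p * u x ^ (p - 1)) * η x

/-- The linearized operator `L₋` around `u`. -/
def Lminus {N : ℕ} (ω p : ℝ) (u ζ : EuclideanSpace ℝ (Fin N) → ℝ)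
    (x : EuclideanSpace ℝ (Fin N)) : ℝ :=
  -lap ζ x + ω * ζ x - (lap (fun y => (u y) ^ 2) x + u x ^ (p - 1)) * ζ x

/-!
The radial derivative `∂_r u` is the negative direction. Differentiating the equation puts every
`∂ᵢu = (xᵢ/r) ∂_r u` in the kernel of `L₊`, and since `xᵢ/r` is a spherical harmonic with eigenvalue
`N - 1`, this means `L₊(∂_r u) = -(N - 1) r⁻² (1 + 2u²) ∂_r u`. Jacobi's factorization then gives,
for every cutoff `φ` supported away from the origin,
`⟨L₊(φ ∂_r u), φ ∂_r u⟩ = ∫ (1 + 2u²) |∇u|² (|∇φ|² - (N - 1) φ² / r²)`.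
Along cutoffs `φ → 1` with `r |∇φ|` bounded, the right-hand side converges to
`-(N - 1) ∫ (1 + 2u²) |∇u|² / r² < 0`.
-/

section PartialDerivatives

variable {N : ℕ} {F : Type*} [NormedAddCommGroup F] [NormedSpace ℝ F]
  {x : EuclideanSpace ℝ (Fin N)}

lemma pd_congr (i : Fin N) {f g : EuclideanSpace ℝ (Fin N) → F} (h : f =ᶠ[𝓝 x] g) :
    pd i f =ᶠ[𝓝 x] pd i g := by
  filter_upwards [h.fderiv (𝕜 := ℝ)] with y hy
  rw [pd, pd, hy]

lemma pd_const (i : Fin N) (c : F) (x : EuclideanSpace ℝ (Fin N)) :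
    pd i (fun _ => c) x = 0 := by
  simp [pd]

lemma contDiffAt_pd {f : EuclideanSpace ℝ (Fin N) → F} {m n : WithTop ℕ∞} (i : Fin N)
    (hf : ContDiffAt ℝ n f x) (hmn : m + 1 ≤ n) : ContDiffAt ℝ m (pd i f) x :=
  (hf.fderiv_right hmn).clm_apply contDiffAt_const

lemma contDiff_pd {f : EuclideanSpace ℝ (Fin N) → F} {m n : WithTop ℕ∞} (i : Fin N)
    (hf : ContDiff ℝ n f) (hmn : m + 1 ≤ n) : ContDiff ℝ m (pd i f) :=
  (hf.fderiv_right hmn).clm_apply contDiff_const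

lemma differentiableAt_pd {f : EuclideanSpace ℝ (Fin N) → F} (i : Fin N)
    (hf : ContDiffAt ℝ 2 f x) : DifferentiableAt ℝ (pd i f) x :=
  (contDiffAt_pd (m := 1) i hf (by norm_num)).differentiableAt one_ne_zero

lemma pd_comm {f : EuclideanSpace ℝ (Fin N) → F} (i j : Fin N) (hf : ContDiffAt ℝ 2 f x) :
    pd i (pd j f) x = pd j (pd i f) x := by
  have hdf : DifferentiableAt ℝ (fderiv ℝ f) x :=
    (hf.fderiv_right (m := 1) (by norm_num)).differentiableAt one_ne_zero
  have pd_pd (k l : Fin N) : pd k (pd l f) x =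
      fderiv ℝ (fderiv ℝ f) x (EuclideanSpace.single k 1) (EuclideanSpace.single l 1) := by
    unfold pd
    rw [fderiv_clm_apply hdf (differentiableAt_const _)]
    simp
  rw [pd_pd, pd_pd]
  exact hf.isSymmSndFDerivAt (by simp) _ _

lemma pd_add {f g : EuclideanSpace ℝ (Fin N) → F} (i : Fin N) (hf : DifferentiableAt ℝ f x)
    (hg : DifferentiableAt ℝ g x) :
    pd i (fun y => f y + g y) x = pd i f x + pd i g x := by
  simp [pd, fderiv_fun_add hf hg]

lemma pd_sub {f g : EuclideanSpace ℝ (Fin N) → F} (i : Fin N) (hf : DifferentiableAt ℝ f x)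
    (hg : DifferentiableAt ℝ g x) :
    pd i (fun y => f y - g y) x = pd i f x - pd i g x := by
  simp [pd, fderiv_fun_sub hf hg]

lemma hasCompactSupport_pd {f : EuclideanSpace ℝ (Fin N) → F} (i : Fin N)
    (hf : HasCompactSupport f) : HasCompactSupport (pd i f) :=
  hf.fderiv_apply (𝕜 := ℝ) _

lemma integrable_pd {f : EuclideanSpace ℝ (Fin N) → F} (i : Fin N) (hf : ContDiff ℝ 1 f)
    (hc : HasCompactSupport f) : Integrable (pd i f) :=
  (contDiff_pd (m := 0) i hf (by simp)).continuous.integrable_of_hasCompactSupport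
    (hasCompactSupport_pd i hc)

variable {f g : EuclideanSpace ℝ (Fin N) → ℝ}

lemma pd_mul (i : Fin N) (hf : DifferentiableAt ℝ f x) (hg : DifferentiableAt ℝ g x) :
    pd i (fun y => f y * g y) x = f x * pd i g x + g x * pd i f x := by
  simp [pd, fderiv_fun_mul hf hg]

lemma pd_const_mul (i : Fin N) (c : ℝ) (f : EuclideanSpace ℝ (Fin N) → ℝ)
    (x : EuclideanSpace ℝ (Fin N)) : pd i (fun y => c * f y) x = c * pd i f x := by
  have h := congrFun (fderiv_const_smul_field (𝕜 := ℝ) (f := f) c) x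
  simpa [pd, Pi.smul_def] using congrArg (fun A => A (EuclideanSpace.single i 1)) h

lemma pd_sq (i : Fin N) (hf : DifferentiableAt ℝ f x) :
    pd i (fun y => f y ^ 2) x = 2 * (f x * pd i f x) := by
  simp only [pow_two, pd_mul i hf hf]
  ring

lemma pd_rpow_const (i : Fin N) (p : ℝ) (hf : DifferentiableAt ℝ f x) (hfx : f x ≠ 0) :
    pd i (fun y => f y ^ p) x = p * f x ^ (p - 1) * pd i f x := by
  simp [pd, (hf.hasFDerivAt.rpow_const (p := p) (Or.inl hfx)).fderiv]

lemma pd_coord (i j : Fin N) (x : EuclideanSpace ℝ (Fin N)) :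
    pd j (fun y : EuclideanSpace ℝ (Fin N) => y i) x = if i = j then 1 else 0 := by
  have h : fderiv ℝ (fun y : EuclideanSpace ℝ (Fin N) => y i) x = EuclideanSpace.proj (𝕜 := ℝ) i :=
    (EuclideanSpace.proj (𝕜 := ℝ) i).hasFDerivAt.fderiv
  simp [pd, h]

lemma fderiv_apply_eq_sum_pd (f : EuclideanSpace ℝ (Fin N) → ℝ)
    (x v : EuclideanSpace ℝ (Fin N)) : fderiv ℝ f x v = ∑ i, v i * pd i f x := by
  have hv : v = ∑ i, v i • EuclideanSpace.single i (1 : ℝ) := by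
    ext j
    simp [Pi.single_apply]
  conv_lhs => rw [hv]
  simp [pd]

lemma gradsq_eq_norm_fderiv_sq (f : EuclideanSpace ℝ (Fin N) → ℝ)
    (x : EuclideanSpace ℝ (Fin N)) : gradsq f x = ‖fderiv ℝ f x‖ ^ 2 := by
  simp [(EuclideanSpace.basisFun (Fin N) ℝ).norm_dual, gradsq, pd]

lemma integral_pd_eq_zero (i : Fin N) (hf : ContDiff ℝ 1 f) (hc : HasCompactSupport f) :
    ∫ x, pd i f x = 0 := by
  have by_parts := integral_mul_fderiv_eq_neg_fderiv_mul_of_integrable (𝕜 := ℝ)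
    (μ := (volume : Measure (EuclideanSpace ℝ (Fin N))))
    (f := fun _ => (1 : ℝ)) (g := f) (v := EuclideanSpace.single i 1) (by simp)
    (by simp only [one_mul]; exact integrable_pd i hf hc)
    (by simpa using hf.continuous.integrable_of_hasCompactSupport hc)
    (fun x _ => differentiableAt_const _) (fun x _ => hf.differentiable one_ne_zero x)
  simpa [pd] using by_parts

end PartialDerivatives

section Laplacian

variable {N : ℕ} {F : Type*} [NormedAddCommGroup F] [NormedSpace ℝ F]
  {x : EuclideanSpace ℝ (Fin N)}

lemma lap_congr {f g : EuclideanSpace ℝ (Fin N) → F} (h : f =ᶠ[𝓝 x] g) : lap f x = lap g x :=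
  Finset.sum_congr rfl fun i _ => (pd_congr i (pd_congr i h)).eq_of_nhds

lemma contDiff_lap {f : EuclideanSpace ℝ (Fin N) → F} {m n : WithTop ℕ∞} (hf : ContDiff ℝ n f)
    (hmn : m + 1 + 1 ≤ n) : ContDiff ℝ m (lap f) :=
  ContDiff.sum fun i _ => contDiff_pd i (contDiff_pd i hf hmn) le_rfl

lemma pd_lap {f : EuclideanSpace ℝ (Fin N) → F} (i : Fin N) (hf : ContDiff ℝ 3 f)
    (x : EuclideanSpace ℝ (Fin N)) : pd i (lap f) x = lap (pd i f) x := by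
  have hpd (j : Fin N) : ContDiff ℝ 2 (pd j f) := contDiff_pd j hf (by norm_num)
  have hcomm (j : Fin N) : pd i (pd j f) = pd j (pd i f) :=
    funext fun y => pd_comm i j (hf.contDiffAt.of_le (by norm_num))
  calc pd i (lap f) x = ∑ j, pd i (pd j (pd j f)) x := by
        change fderiv ℝ (fun y => ∑ j, pd j (pd j f) y) x (EuclideanSpace.single i 1) = _
        rw [fderiv_fun_sum fun j _ => differentiableAt_pd j (hpd j).contDiffAt]
        simp [pd]
    _ = ∑ j, pd j (pd i (pd j f)) x :=
        Finset.sum_congr rfl fun j _ => pd_comm i j (hpd j).contDiffAt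
    _ = lap (pd i f) x := Finset.sum_congr rfl fun j _ => by
        rw [hcomm j]

variable {f g : EuclideanSpace ℝ (Fin N) → ℝ}

/-- The inner product `∇f · ∇g` of two gradients, the polarization of `gradsq`. -/
def gradDot (f g : EuclideanSpace ℝ (Fin N) → ℝ) (x : EuclideanSpace ℝ (Fin N)) : ℝ :=
  ∑ i, pd i f x * pd i g x

lemma gradDot_self (f : EuclideanSpace ℝ (Fin N) → ℝ) (x : EuclideanSpace ℝ (Fin N)) :
    gradDot f f x = gradsq f x := by
  simp only [gradDot, gradsq, pow_two]

lemma gradDot_comm (f g : EuclideanSpace ℝ (Fin N) → ℝ) (x : EuclideanSpace ℝ (Fin N)) :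
    gradDot f g x = gradDot g f x := by
  simp only [gradDot, mul_comm]

lemma gradDot_mul_left (hf : DifferentiableAt ℝ f x) (hg : DifferentiableAt ℝ g x)
    (h : EuclideanSpace ℝ (Fin N) → ℝ) :
    gradDot (fun y => f y * g y) h x = f x * gradDot g h x + g x * gradDot f h x := by
  simp only [gradDot, Finset.mul_sum, ← Finset.sum_add_distrib]
  refine Finset.sum_congr rfl fun i _ => ?_
  rw [pd_mul i hf hg]
  ring

lemma lap_const_mul (c : ℝ) (f : EuclideanSpace ℝ (Fin N) → ℝ)
    (x : EuclideanSpace ℝ (Fin N)) : lap (fun y => c * f y) x = c * lap f x := by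
  have hpd (i : Fin N) : pd i (fun y => c * f y) = fun y => c * pd i f y :=
    funext (pd_const_mul i c f)
  simp only [lap, hpd, pd_const_mul, Finset.mul_sum]

lemma lap_mul (hf : ContDiffAt ℝ 2 f x) (hg : ContDiffAt ℝ 2 g x) :
    lap (fun y => f y * g y) x = f x * lap g x + 2 * gradDot f g x + g x * lap f x := by
  have hdf := hf.differentiableAt two_ne_zero
  have hdg := hg.differentiableAt two_ne_zero
  simp only [lap, gradDot, Finset.mul_sum, ← Finset.sum_add_distrib]
  refine Finset.sum_congr rfl fun i _ => ?_
  have hpd : pd i (fun y => f y * g y) =ᶠ[𝓝 x] fun y => f y * pd i g y + g y * pd i f y := by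
    filter_upwards [hf.eventually (by simp), hg.eventually (by simp)] with y hfy hgy
    exact pd_mul i (hfy.differentiableAt two_ne_zero) (hgy.differentiableAt two_ne_zero)
  have hdpf := differentiableAt_pd i hf
  have hdpg := differentiableAt_pd i hg
  rw [(pd_congr i hpd).eq_of_nhds, pd_add i (hdf.fun_mul hdpg) (hdg.fun_mul hdpf),
    pd_mul i hdf hdpg, pd_mul i hdg hdpf]
  ring

end Laplacian

section DivergenceForm

variable {N : ℕ} {a f g m φ : EuclideanSpace ℝ (Fin N) → ℝ} {x : EuclideanSpace ℝ (Fin N)}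

/-- The divergence-form operator `div (a ∇f)` with scalar coefficient `a`. -/
def divGrad (a f : EuclideanSpace ℝ (Fin N) → ℝ) (x : EuclideanSpace ℝ (Fin N)) : ℝ :=
  ∑ i, pd i (fun y => a y * pd i f y) x

lemma divGrad_eq_mul_lap_add_gradDot (ha : DifferentiableAt ℝ a x) (hf : ContDiffAt ℝ 2 f x) :
    divGrad a f x = a x * lap f x + gradDot a f x := by
  simp only [divGrad, lap, gradDot, Finset.mul_sum, ← Finset.sum_add_distrib]
  refine Finset.sum_congr rfl fun i _ => ?_
  rw [pd_mul i ha (differentiableAt_pd i hf), mul_comm (pd i a x)]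

lemma divGrad_mul (ha : DifferentiableAt ℝ a x) (hf : ContDiffAt ℝ 2 f x)
    (hg : ContDiffAt ℝ 2 g x) :
    divGrad a (fun y => f y * g y) x =
      f x * divGrad a g x + g x * divGrad a f x + 2 * a x * gradDot f g x := by
  rw [divGrad_eq_mul_lap_add_gradDot ha (hf.mul hg), divGrad_eq_mul_lap_add_gradDot ha hf,
    divGrad_eq_mul_lap_add_gradDot ha hg, lap_mul hf hg, gradDot_comm a,
    gradDot_mul_left (hf.differentiableAt two_ne_zero) (hg.differentiableAt two_ne_zero),
    gradDot_comm g, gradDot_comm f a]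
  ring

/-- Jacobi's factorization: up to a divergence, `m · div (a ∇m)` is the only zeroth-order term. -/
lemma divGrad_mul_mul_self (ha : DifferentiableAt ℝ a x) (hφ : ContDiffAt ℝ 2 φ x)
    (hm : ContDiffAt ℝ 2 m x) :
    divGrad a (fun y => φ y * m y) x * (φ x * m x) =
      φ x ^ 2 * (m x * divGrad a m x) + divGrad (fun y => φ y * (a y * (m y * m y))) φ x
        - a x * m x ^ 2 * gradsq φ x := by
  have hdφ := hφ.differentiableAt two_ne_zero
  have hdm := hm.differentiableAt two_ne_zero
  rw [divGrad_mul ha hφ hm,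
    divGrad_eq_mul_lap_add_gradDot (hdφ.fun_mul (ha.fun_mul (hdm.fun_mul hdm))) hφ,
    gradDot_mul_left hdφ (ha.fun_mul (hdm.fun_mul hdm)),
    gradDot_mul_left ha (hdm.fun_mul hdm), gradDot_mul_left hdm hdm, gradDot_self,
    divGrad_eq_mul_lap_add_gradDot ha hφ, gradDot_comm φ m]
  ring

lemma integrable_divGrad (ha : ContDiff ℝ 1 a) (hf : ContDiff ℝ 2 f) (hc : HasCompactSupport f) :
    Integrable (divGrad a f) :=
  integrable_finsetSum _ fun i _ => integrable_pd i
    (ha.mul (contDiff_pd i hf (by norm_num))) (hasCompactSupport_pd i hc).mul_left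

lemma integral_divGrad_eq_zero (ha : ContDiff ℝ 1 a) (hf : ContDiff ℝ 2 f)
    (hc : HasCompactSupport f) : ∫ x, divGrad a f x = 0 := by
  have hflux (i : Fin N) : ContDiff ℝ 1 (fun y => a y * pd i f y) :=
    ha.mul (contDiff_pd i hf (by norm_num))
  have hflux_c (i : Fin N) : HasCompactSupport (fun y => a y * pd i f y) :=
    (hasCompactSupport_pd i hc).mul_left
  simp only [divGrad]
  rw [integral_finsetSum _ fun i _ => integrable_pd i (hflux i) (hflux_c i)]
  exact Finset.sum_eq_zero fun i _ => integral_pd_eq_zero i (hflux i) (hflux_c i)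

end DivergenceForm

section Radial

/-- Radial symmetry about the origin: `f x` depends on `‖x‖` only. -/
def IsRadial {E β : Type*} [Norm E] (f : E → β) : Prop :=
  ∀ x y, ‖x‖ = ‖y‖ → f x = f y

/-- The radial derivative `∂_r f`, with the value `0` at the origin because `x / 0 = 0`. -/
def radialDeriv {E : Type*} [NormedAddCommGroup E] [NormedSpace ℝ E] (f : E → ℝ) (x : E) : ℝ :=
  fderiv ℝ f x x / ‖x‖

lemma contDiffAt_radialDeriv {E : Type*} [NormedAddCommGroup E] [InnerProductSpace ℝ E]
    {f : E → ℝ} {x : E} {m n : WithTop ℕ∞} (hf : ContDiffAt ℝ n f x) (hmn : m + 1 ≤ n)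
    (hx : x ≠ 0) : ContDiffAt ℝ m (radialDeriv f) x :=
  ((hf.fderiv_right hmn).clm_apply contDiffAt_id).div (contDiffAt_norm ℝ hx)
    (norm_ne_zero_iff.2 hx)

namespace IsRadial

section InnerProductSpace

variable {E : Type*} [NormedAddCommGroup E] [InnerProductSpace ℝ E] {f : E → ℝ}

lemma fderiv_apply_eq_zero_of_inner_eq_zero (hf : IsRadial f) {x v : E}
    (hxv : inner ℝ x v = 0) : fderiv ℝ f x v = 0 := by
  by_cases hd : DifferentiableAt ℝ f x
  · have hnorm (t : ℝ) : ‖x + t • v‖ = ‖x + t • -v‖ := by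
      rw [← sq_eq_sq₀ (norm_nonneg _) (norm_nonneg _), norm_add_sq_real, norm_add_sq_real]
      simp [inner_smul_right, hxv, norm_smul]
    have hreflect : lineDeriv ℝ f x v = lineDeriv ℝ f x (-v) := by
      simp only [lineDeriv, fun t => hf _ _ (hnorm t)]
    rw [hd.lineDeriv_eq_fderiv, hd.lineDeriv_eq_fderiv, map_neg] at hreflect
    linarith
  · simp [fderiv_zero_of_not_differentiableAt hd]

lemma fderiv_apply_eq (hf : IsRadial f) (x v : E) :
    fderiv ℝ f x v = inner ℝ x v / ‖x‖ * radialDeriv f x := by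
  have horth : inner ℝ x (v - (inner ℝ x v / ‖x‖ ^ 2) • x) = 0 := by
    rcases eq_or_ne x 0 with rfl | hx
    · simp
    · have := norm_ne_zero_iff.2 hx
      rw [inner_sub_right, inner_smul_right, real_inner_self_eq_norm_sq]
      field_simp
      ring
  have h := hf.fderiv_apply_eq_zero_of_inner_eq_zero horth
  rw [map_sub, map_smul, smul_eq_mul, sub_eq_zero] at h
  rw [h, radialDeriv]
  ring

lemma fderiv_zero (hf : IsRadial f) : fderiv ℝ f 0 = 0 := by
  ext v
  simp [hf.fderiv_apply_eq]

lemma isRadial_radialDeriv (hf : IsRadial f) (hd : Differentiable ℝ f) :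
    IsRadial (radialDeriv f) := by
  intro x y hxy
  have hnorm (t : ℝ) : ‖x + t • x‖ = ‖y + t • y‖ := by
    have hsmul (z : E) : z + t • z = (1 + t) • z := by rw [add_smul, one_smul]
    rw [hsmul, hsmul, norm_smul, norm_smul, hxy]
  have hline : lineDeriv ℝ f x x = lineDeriv ℝ f y y := by
    simp only [lineDeriv, fun t => hf _ _ (hnorm t)]
  rw [(hd x).lineDeriv_eq_fderiv, (hd y).lineDeriv_eq_fderiv] at hline
  rw [radialDeriv, radialDeriv, hline, hxy]

end InnerProductSpace

variable {N : ℕ} {f : EuclideanSpace ℝ (Fin N) → ℝ}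

lemma pd_eq (hf : IsRadial f) (i : Fin N) (x : EuclideanSpace ℝ (Fin N)) :
    pd i f x = x i / ‖x‖ * radialDeriv f x := by
  simp [pd, hf.fderiv_apply_eq, EuclideanSpace.inner_single_right]

lemma gradsq_eq (hf : IsRadial f) (x : EuclideanSpace ℝ (Fin N)) :
    gradsq f x = radialDeriv f x ^ 2 := by
  rcases eq_or_ne x 0 with rfl | hx
  · simp [gradsq, hf.pd_eq, radialDeriv]
  · have := norm_ne_zero_iff.2 hx
    simp only [gradsq, hf.pd_eq, mul_pow, div_pow]
    rw [← Finset.sum_mul, ← Finset.sum_div, ← EuclideanSpace.real_norm_sq_eq]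
    field_simp

lemma gradDot_eq_zero (hf : IsRadial f) {g : EuclideanSpace ℝ (Fin N) → ℝ}
    {x : EuclideanSpace ℝ (Fin N)} (hg : fderiv ℝ g x x = 0) : gradDot f g x = 0 := by
  calc gradDot f g x = radialDeriv f x / ‖x‖ * ∑ i, x i * pd i g x := by
        rw [gradDot, Finset.mul_sum]
        refine Finset.sum_congr rfl fun i _ => ?_
        rw [hf.pd_eq]
        ring
    _ = 0 := by rw [← fderiv_apply_eq_sum_pd, hg, mul_zero]

end IsRadial

lemma isRadial_norm {E : Type*} [Norm E] : IsRadial (fun y : E => ‖y‖) := fun _ _ h => h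

variable {N : ℕ} {x : EuclideanSpace ℝ (Fin N)}

lemma gradsq_norm (hx : x ≠ 0) : gradsq (fun y => ‖y‖) x = 1 := by
  have hd : DifferentiableAt ℝ (fun y : EuclideanSpace ℝ (Fin N) => ‖y‖) x :=
    (contDiffAt_norm ℝ hx (n := 1)).differentiableAt one_ne_zero
  rw [isRadial_norm.gradsq_eq, radialDeriv, hd.fderiv_norm_self,
    div_self (norm_ne_zero_iff.2 hx), one_pow]

lemma lap_norm_sq (x : EuclideanSpace ℝ (Fin N)) : lap (fun y => ‖y‖ ^ 2) x = 2 * N := by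
  have hpd (i : Fin N) : pd i (fun y : EuclideanSpace ℝ (Fin N) => ‖y‖ ^ 2) =
      fun y => 2 * y i := by
    funext y
    simp [pd, fderiv_norm_sq_apply, EuclideanSpace.inner_single_right]
  simp [lap, hpd, pd_const_mul, pd_coord, mul_comm]

lemma lap_norm (hx : x ≠ 0) : lap (fun y => ‖y‖) x = (N - 1) / ‖x‖ := by
  have hn := norm_ne_zero_iff.2 hx
  have hC : ContDiffAt ℝ 2 (fun y : EuclideanSpace ℝ (Fin N) => ‖y‖) x := contDiffAt_norm ℝ hx
  have h := lap_norm_sq x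
  simp only [pow_two] at h
  rw [lap_mul hC hC, gradDot_self, gradsq_norm hx] at h
  rw [eq_div_iff hn]
  linarith

/-- The `i`-th coordinate of the direction `x / ‖x‖`, a spherical harmonic of degree one. -/
def dirCoord (i : Fin N) (x : EuclideanSpace ℝ (Fin N)) : ℝ := x i / ‖x‖

lemma contDiffAt_dirCoord (i : Fin N) (hx : x ≠ 0) {n : WithTop ℕ∞} :
    ContDiffAt ℝ n (dirCoord i) x :=
  (EuclideanSpace.proj (𝕜 := ℝ) i).contDiff.contDiffAt.div (contDiffAt_norm ℝ hx)
    (norm_ne_zero_iff.2 hx)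

lemma exists_dirCoord_ne_zero (hx : x ≠ 0) : ∃ i, dirCoord i x ≠ 0 := by
  obtain ⟨i, hi⟩ : ∃ i, x i ≠ 0 := by
    by_contra! h
    exact hx (by ext i; simp [h])
  exact ⟨i, div_ne_zero hi (norm_ne_zero_iff.2 hx)⟩

lemma fderiv_dirCoord_self (i : Fin N) (x : EuclideanSpace ℝ (Fin N)) :
    fderiv ℝ (dirCoord i) x x = 0 := by
  rcases eq_or_ne x 0 with rfl | hx
  · simp
  have hd := (contDiffAt_dirCoord i hx (n := 1)).differentiableAt one_ne_zero
  have hconst : (fun t : ℝ => dirCoord i (x + t • x)) =ᶠ[𝓝 0] fun _ => dirCoord i x := by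
    filter_upwards [lt_mem_nhds (show (-1 : ℝ) < 0 by norm_num)] with t ht
    have hpos : 0 < 1 + t := by linarith
    have hsmul : x + t • x = (1 + t) • x := by rw [add_smul, one_smul]
    rw [hsmul, dirCoord, dirCoord, norm_smul, Real.norm_of_nonneg hpos.le, PiLp.smul_apply,
      smul_eq_mul, mul_div_mul_left _ _ hpos.ne']
  rw [← hd.lineDeriv_eq_fderiv, lineDeriv, hconst.deriv_eq, deriv_const]

lemma lap_dirCoord (i : Fin N) (hx : x ≠ 0) :
    lap (dirCoord i) x = -((N - 1) / ‖x‖ ^ 2) * dirCoord i x := by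
  have hn := norm_ne_zero_iff.2 hx
  have hcoord : (fun y : EuclideanSpace ℝ (Fin N) => y i) =ᶠ[𝓝 x]
      fun y => ‖y‖ * dirCoord i y := by
    filter_upwards [isOpen_ne.mem_nhds hx] with y hy
    rw [dirCoord, mul_div_cancel₀ _ (norm_ne_zero_iff.2 hy)]
  have hlap_coord : lap (fun y : EuclideanSpace ℝ (Fin N) => y i) x = 0 := by
    have hpd (j : Fin N) := funext (pd_coord (N := N) i j)
    simp only [lap, hpd, pd_const, Finset.sum_const_zero]
  rw [lap_congr hcoord, lap_mul (contDiffAt_norm ℝ hx) (contDiffAt_dirCoord i hx),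
    isRadial_norm.gradDot_eq_zero (fderiv_dirCoord_self i x), lap_norm hx] at hlap_coord
  field_simp at hlap_coord ⊢
  linarith

/-- `N - 1` is the eigenvalue of the spherical Laplacian on `dirCoord i`. -/
lemma divGrad_dirCoord_mul {a m : EuclideanSpace ℝ (Fin N) → ℝ} (i : Fin N) (hx : x ≠ 0)
    (ha : IsRadial a) (had : DifferentiableAt ℝ a x) (hm : IsRadial m)
    (hmC : ContDiffAt ℝ 2 m x) :
    divGrad a (fun y => dirCoord i y * m y) x =
      dirCoord i x * (divGrad a m x - (N - 1) / ‖x‖ ^ 2 * (a x * m x)) := by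
  have hθ : ContDiffAt ℝ 2 (dirCoord i) x := contDiffAt_dirCoord i hx
  rw [divGrad_mul had hθ hmC, gradDot_comm,
    hm.gradDot_eq_zero (fderiv_dirCoord_self i x), divGrad_eq_mul_lap_add_gradDot had hθ,
    ha.gradDot_eq_zero (fderiv_dirCoord_self i x), lap_dirCoord i hx]
  ring

end Radial

section Linearization

variable {N : ℕ} {ω p : ℝ} {u η φ m : EuclideanSpace ℝ (Fin N) → ℝ}
  {x : EuclideanSpace ℝ (Fin N)}

/-- The potential of `L₊` once it is written in divergence form,
`L₊η = linPotential · η - div ((1 + 2u²) ∇η)`. -/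
def linPotential (ω p : ℝ) (u : EuclideanSpace ℝ (Fin N) → ℝ)
    (x : EuclideanSpace ℝ (Fin N)) : ℝ :=
  ω - p * u x ^ (p - 1) - lap (fun y => u y ^ 2) x - 2 * u x * lap u x

lemma pd_one_add_two_mul_sq (i : Fin N) (hu : DifferentiableAt ℝ u x) :
    pd i (fun y => 1 + 2 * u y ^ 2) x = 4 * u x * pd i u x := by
  rw [pd_add i (differentiableAt_const _) ((hu.fun_pow 2).const_mul 2), pd_const, pd_const_mul,
    pd_sq i hu]
  ring

lemma Lplus_eq_linPotential_mul_sub_divGrad (ω p : ℝ) (hu : ContDiffAt ℝ 2 u x)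
    (hη : ContDiffAt ℝ 2 η x) :
    Lplus ω p u η x = linPotential ω p u x * η x - divGrad (fun y => 1 + 2 * u y ^ 2) η x := by
  have hdu := hu.differentiableAt two_ne_zero
  have hgrad : gradDot (fun y => 1 + 2 * u y ^ 2) η x = 4 * u x * gradDot u η x := by
    simp only [gradDot, pd_one_add_two_mul_sq _ hdu, Finset.mul_sum, mul_assoc]
  rw [divGrad_eq_mul_lap_add_gradDot (((hdu.fun_pow 2).const_mul 2).const_add 1) hη, hgrad,
    Lplus, lap_mul hu hη, linPotential]
  ring

lemma Lplus_const_mul (ω p : ℝ) (u : EuclideanSpace ℝ (Fin N) → ℝ) (c : ℝ)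
    (η : EuclideanSpace ℝ (Fin N) → ℝ) (x : EuclideanSpace ℝ (Fin N)) :
    Lplus ω p u (fun y => c * η y) x = c * Lplus ω p u η x := by
  have hassoc : (fun y => u y * (c * η y)) = fun y => c * (u y * η y) := by
    funext y
    ring
  rw [Lplus, Lplus, hassoc, lap_const_mul, lap_const_mul]
  ring

lemma pd_qls_eq_Lplus_pd (ω p : ℝ) (i : Fin N) (hu : ContDiff ℝ 3 u) (hux : u x ≠ 0) :
    pd i (fun y => -lap u y - u y * lap (fun z => u z ^ 2) y + ω * u y - u y ^ p) x =
      Lplus ω p u (pd i u) x := by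
  have hd : Differentiable ℝ u := hu.differentiable (by norm_num)
  have hlap {f : EuclideanSpace ℝ (Fin N) → ℝ} (hf : ContDiff ℝ 3 f) :
      DifferentiableAt ℝ (lap f) x :=
    (contDiff_lap (m := 1) hf (by norm_num)).differentiable one_ne_zero x
  have hpow : DifferentiableAt ℝ (fun y => u y ^ p) x := (hd x).rpow_const (Or.inl hux)
  have hlap_pd_sq : lap (pd i fun y => u y ^ 2) x = 2 * lap (fun y => u y * pd i u y) x := by
    have hpd : (pd i fun y => u y ^ 2) = fun y => 2 * (u y * pd i u y) :=
      funext fun y => pd_sq i (hd y)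
    rw [hpd, lap_const_mul]
  have hsq : ContDiff ℝ 3 fun y => u y ^ 2 := hu.pow 2
  simp only [neg_eq_neg_one_mul (lap u _)]
  have hlinear := (hlap hu).const_mul (-1)
  have hquasilinear := (hd x).fun_mul (hlap hsq)
  have hmass := (hd x).const_mul ω
  rw [pd_sub i ((hlinear.fun_sub hquasilinear).fun_add hmass) hpow,
    pd_add i (hlinear.fun_sub hquasilinear) hmass, pd_sub i hlinear hquasilinear,
    pd_mul i (hd x) (hlap hsq), pd_const_mul, pd_const_mul, pd_lap i hu, pd_lap i hsq,
    hlap_pd_sq, pd_rpow_const i p (hd x) hux, Lplus]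
  ring

lemma Lplus_pd_eq_zero (hu : ContDiff ℝ 3 u) (hpos : ∀ x, 0 < u x)
    (hsol : ∀ x, -lap u x - u x * lap (fun y => u y ^ 2) x + ω * u x - u x ^ p = 0)
    (i : Fin N) (x : EuclideanSpace ℝ (Fin N)) : Lplus ω p u (pd i u) x = 0 := by
  rw [← pd_qls_eq_Lplus_pd ω p i hu (hpos x).ne', funext hsol, pd_const]

/-- Since `∂ᵢu = (xᵢ/|x|) ∂_r u`, removing the angular factor from `L₊(∂ᵢu) = 0` leaves the
centrifugal term. -/
lemma Lplus_radialDeriv (hu : ContDiff ℝ 3 u) (hrad : IsRadial u)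
    (hker : ∀ i, Lplus ω p u (pd i u) x = 0) (hx : x ≠ 0) :
    Lplus ω p u (radialDeriv u) x =
      -((N - 1) / ‖x‖ ^ 2) * ((1 + 2 * u x ^ 2) * radialDeriv u x) := by
  obtain ⟨i, hi⟩ := exists_dirCoord_ne_zero hx
  have hd : Differentiable ℝ u := hu.differentiable (by norm_num)
  have hu₂ : ContDiffAt ℝ 2 u x := hu.contDiffAt.of_le (by norm_num)
  have hm : ContDiffAt ℝ 2 (radialDeriv u) x :=
    contDiffAt_radialDeriv hu.contDiffAt (by norm_num) hx
  have hpd : pd i u = fun y => dirCoord i y * radialDeriv u y := funext (hrad.pd_eq i)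
  have hweight : IsRadial fun y => 1 + 2 * u y ^ 2 := fun y z hyz => by
    simp only [hrad y z hyz]
  have hdir := hker i
  rw [hpd, Lplus_eq_linPotential_mul_sub_divGrad ω p hu₂ ((contDiffAt_dirCoord i hx).mul hm),
    divGrad_dirCoord_mul i hx hweight ((((hd x).fun_pow 2).const_mul 2).const_add 1)
      (hrad.isRadial_radialDeriv hd) hm] at hdir
  rw [Lplus_eq_linPotential_mul_sub_divGrad ω p hu₂ hm]
  refine mul_left_cancel₀ hi ?_
  linear_combination hdir

lemma Lplus_mul_mul_self (ω p : ℝ) (hu : ContDiffAt ℝ 2 u x) (hφ : ContDiffAt ℝ 2 φ x)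
    (hm : ContDiffAt ℝ 2 m x) :
    Lplus ω p u (fun y => φ y * m y) x * (φ x * m x) =
      φ x ^ 2 * (m x * Lplus ω p u m x) + (1 + 2 * u x ^ 2) * m x ^ 2 * gradsq φ x
        - divGrad (fun y => φ y * ((1 + 2 * u y ^ 2) * (m y * m y))) φ x := by
  have hweight : DifferentiableAt ℝ (fun y => 1 + 2 * u y ^ 2) x :=
    (((hu.differentiableAt two_ne_zero).fun_pow 2).const_mul 2).const_add 1
  rw [Lplus_eq_linPotential_mul_sub_divGrad ω p hu (hφ.mul hm),
    Lplus_eq_linPotential_mul_sub_divGrad ω p hu hm]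
  linear_combination -divGrad_mul_mul_self hweight hφ hm

lemma contDiff_mul_of_forall_mem_tsupport {E : Type*} [NormedAddCommGroup E] [NormedSpace ℝ E]
    {φ m : E → ℝ} {n : WithTop ℕ∞} (hφ : ContDiff ℝ n φ)
    (hm : ∀ x ∈ tsupport φ, ContDiffAt ℝ n m x) : ContDiff ℝ n (fun x => φ x * m x) := by
  refine contDiff_iff_contDiffAt.2 fun x => ?_
  by_cases hx : x ∈ tsupport φ
  · exact hφ.contDiffAt.mul (hm x hx)
  · refine contDiffAt_const (c := 0) |>.congr_of_eventuallyEq ?_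
    filter_upwards [notMem_tsupport_iff_eventuallyEq.1 hx] with y hy
    simp [hy]

lemma integral_Lplus_mul_mul_self (ω p : ℝ) (hu : ContDiff ℝ 2 u) (hφ : ContDiff ℝ 2 φ)
    (hφc : HasCompactSupport φ) (hm : ∀ x ∈ tsupport φ, ContDiffAt ℝ 2 m x)
    (hint : Integrable fun x =>
      φ x ^ 2 * (m x * Lplus ω p u m x) + (1 + 2 * u x ^ 2) * m x ^ 2 * gradsq φ x) :
    ∫ x, Lplus ω p u (fun y => φ y * m y) x * (φ x * m x) =
      ∫ x, (φ x ^ 2 * (m x * Lplus ω p u m x) + (1 + 2 * u x ^ 2) * m x ^ 2 * gradsq φ x) := by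
  set b : EuclideanSpace ℝ (Fin N) → ℝ := fun y => φ y * ((1 + 2 * u y ^ 2) * (m y * m y))
  have hb : ContDiff ℝ 1 b := by
    refine (contDiff_mul_of_forall_mem_tsupport hφ fun x hx => ?_).of_le (by norm_num)
    exact (contDiffAt_const.add (contDiffAt_const.mul (hu.contDiffAt.pow 2))).mul
      ((hm x hx).mul (hm x hx))
  have hpointwise (x : EuclideanSpace ℝ (Fin N)) :
      Lplus ω p u (fun y => φ y * m y) x * (φ x * m x) =
        φ x ^ 2 * (m x * Lplus ω p u m x) + (1 + 2 * u x ^ 2) * m x ^ 2 * gradsq φ x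
          - divGrad b φ x := by
    by_cases hx : x ∈ tsupport φ
    · exact Lplus_mul_mul_self ω p hu.contDiffAt hφ.contDiffAt (hm x hx)
    · have hφx : φ x = 0 := image_eq_zero_of_notMem_tsupport hx
      have hpd (i : Fin N) : pd i φ x = 0 := by simp [pd, fderiv_of_notMem_tsupport ℝ hx]
      have hdiv : divGrad b φ x = 0 := by
        rw [divGrad_eq_mul_lap_add_gradDot (hb.differentiable one_ne_zero x) hφ.contDiffAt]
        simp [gradDot, hpd, b, hφx]
      simp [hφx, gradsq, hpd, hdiv]
  simp only [hpointwise]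
  rw [integral_sub hint (integrable_divGrad hb hφ hφc), integral_divGrad_eq_zero hb hφ hφc,
    sub_zero]

lemma integral_Lplus_mul_radialDeriv (hu : ContDiff ℝ 3 u) (hrad : IsRadial u)
    (hker : ∀ i x, Lplus ω p u (pd i u) x = 0)
    (hint : Integrable fun x => (1 + 2 * u x ^ 2) * gradsq u x / ‖x‖ ^ 2)
    (hφ : ContDiff ℝ 2 φ) (hφc : HasCompactSupport φ) (hφ0 : 0 ∉ tsupport φ) :
    ∫ x, Lplus ω p u (fun y => φ y * radialDeriv u y) x * (φ x * radialDeriv u x) =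
      ∫ x, (1 + 2 * u x ^ 2) * gradsq u x / ‖x‖ ^ 2 *
        ((‖x‖ * ‖fderiv ℝ φ x‖) ^ 2 - (N - 1) * φ x ^ 2) := by
  have hm : ∀ x ∈ tsupport φ, ContDiffAt ℝ 2 (radialDeriv u) x := fun x hx =>
    contDiffAt_radialDeriv hu.contDiffAt (by norm_num) (ne_of_mem_of_not_mem hx hφ0)
  have hform : (fun x => φ x ^ 2 * (radialDeriv u x * Lplus ω p u (radialDeriv u) x)
        + (1 + 2 * u x ^ 2) * radialDeriv u x ^ 2 * gradsq φ x) = fun x =>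
      (1 + 2 * u x ^ 2) * gradsq u x / ‖x‖ ^ 2 *
        ((‖x‖ * ‖fderiv ℝ φ x‖) ^ 2 - (N - 1) * φ x ^ 2) := by
    funext x
    rcases eq_or_ne x 0 with rfl | hx
    · simp [radialDeriv]
    · have := norm_ne_zero_iff.2 hx
      rw [Lplus_radialDeriv hu hrad (hker · x) hx, hrad.gradsq_eq, gradsq_eq_norm_fderiv_sq]
      field_simp
      ring
  have hcont : Continuous fun x => (‖x‖ * ‖fderiv ℝ φ x‖) ^ 2 - (N - 1) * φ x ^ 2 := by
    have := hφ.continuous_fderiv two_ne_zero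
    have := hφ.continuous
    fun_prop
  have hsupp : HasCompactSupport fun x => (‖x‖ * ‖fderiv ℝ φ x‖) ^ 2 - (N - 1) * φ x ^ 2 := by
    simp only [pow_two]
    exact (hφc.fderiv (𝕜 := ℝ)).norm.mul_left.mul_left.sub hφc.mul_left.mul_left
  obtain ⟨M, hM⟩ := hcont.bounded_above_of_compact_support hsupp
  rw [integral_Lplus_mul_mul_self ω p (hu.of_le (by norm_num)) hφ hφc hm, hform]
  rw [hform]
  exact hint.mul_bdd (c := M) hcont.aestronglyMeasurable (.of_forall hM)

end Linearization

section AnnularCutoff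

variable {E : Type*} [NormedAddCommGroup E] [NormedSpace ℝ E] [FiniteDimensional ℝ E]

/-- A smooth bump function equal to `1` on the unit ball and supported in the ball of radius `2`. -/
def unitBump (E : Type*) [NormedAddCommGroup E] : ContDiffBump (0 : E) :=
  ⟨1, 2, one_pos, one_lt_two⟩

/-- The difference of two dilates of `unitBump`, which is `1` for `2 / (n + 1) ≤ ‖x‖ ≤ n + 1` and
vanishes near the origin. Since it is built from dilations, `‖x‖ ‖∇(annularCutoff n)‖` is bounded
uniformly in `n`. -/
def annularCutoff (n : ℕ) (x : E) : ℝ :=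
  unitBump E ((n + 1 : ℝ)⁻¹ • x) - unitBump E ((n + 1 : ℝ) • x)

lemma contDiff_annularCutoff (n : ℕ) {m : ℕ∞} : ContDiff ℝ m (annularCutoff n : E → ℝ) :=
  ((unitBump E).contDiff.comp (contDiff_const_smul _)).sub
    ((unitBump E).contDiff.comp (contDiff_const_smul _))

lemma hasCompactSupport_annularCutoff (n : ℕ) : HasCompactSupport (annularCutoff n : E → ℝ) :=
  ((unitBump E).hasCompactSupport.comp_smul (by positivity)).sub
    ((unitBump E).hasCompactSupport.comp_smul (by positivity))

lemma unitBump_smul_eventuallyEq_one {c : ℝ} {x : E} (hx : ‖c • x‖ < 1) :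
    (fun y => unitBump E (c • y)) =ᶠ[𝓝 x] 1 := by
  have hcont : Tendsto (fun y : E => c • y) (𝓝 x) (𝓝 (c • x)) :=
    (continuous_const_smul c).tendsto x
  exact hcont.eventually ((unitBump E).eventuallyEq_one_of_mem_ball (mem_ball_zero_iff.2 hx))

lemma zero_notMem_tsupport_annularCutoff (n : ℕ) :
    (0 : E) ∉ tsupport (annularCutoff n : E → ℝ) := by
  rw [notMem_tsupport_iff_eventuallyEq]
  filter_upwards [unitBump_smul_eventuallyEq_one (E := E) (c := (n + 1 : ℝ)⁻¹) (x := 0) (by simp),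
    unitBump_smul_eventuallyEq_one (E := E) (c := (n + 1 : ℝ)) (x := 0) (by simp)] with y hin hout
  simp [annularCutoff, hin, hout]

lemma abs_annularCutoff_le_one (n : ℕ) (x : E) : |annularCutoff n x| ≤ 1 :=
  abs_sub_le_of_nonneg_of_le (unitBump E).nonneg (unitBump E).le_one (unitBump E).nonneg
    (unitBump E).le_one

lemma eventually_annularCutoff_eventuallyEq_one {x : E} (hx : x ≠ 0) :
    ∀ᶠ n : ℕ in atTop, annularCutoff n =ᶠ[𝓝 x] 1 := by
  have hn : Tendsto (fun n : ℕ => (n + 1 : ℝ)) atTop atTop :=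
    tendsto_atTop_add_const_right _ _ tendsto_natCast_atTop_atTop
  have hx' := norm_pos_iff.2 hx
  filter_upwards [hn.eventually_gt_atTop ‖x‖, hn.eventually_gt_atTop (2 / ‖x‖)] with n hlarge hsmall
  have hpos : (0 : ℝ) < n + 1 := by positivity
  have hout : ∀ᶠ y in 𝓝 x, 2 < ‖(n + 1 : ℝ) • y‖ := by
    refine (continuous_const_smul (n + 1 : ℝ)).norm.continuousAt.eventually_const_lt ?_
    simp only [norm_smul, Real.norm_of_nonneg hpos.le]
    exact (div_lt_iff₀ hx').1 hsmall
  have hin : ‖(n + 1 : ℝ)⁻¹ • x‖ < 1 := by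
    rwa [norm_smul, Real.norm_of_nonneg (inv_nonneg.2 hpos.le), inv_mul_lt_one₀ hpos]
  filter_upwards [unitBump_smul_eventuallyEq_one hin, hout] with y hy_in hy_out
  have hzero : unitBump E ((n + 1 : ℝ) • y) = 0 :=
    (unitBump E).zero_of_le_dist (by rw [dist_zero_right]; exact hy_out.le)
  simp [annularCutoff, hy_in, hzero]

variable (E) in
lemma exists_norm_mul_norm_fderiv_unitBump_le :
    ∃ M : ℝ, ∀ (c : ℝ) (x : E), ‖x‖ * ‖fderiv ℝ (fun y => unitBump E (c • y)) x‖ ≤ M := by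
  have hcont : Continuous fun y : E => ‖y‖ * ‖fderiv ℝ (unitBump E) y‖ :=
    continuous_norm.mul (((unitBump E).contDiff (n := 1)).continuous_fderiv one_ne_zero).norm
  have hsupp : HasCompactSupport fun y : E => ‖y‖ * ‖fderiv ℝ (unitBump E) y‖ :=
    ((unitBump E).hasCompactSupport.fderiv (𝕜 := ℝ)).norm.mul_left
  obtain ⟨M, hM⟩ := hcont.bounded_above_of_compact_support hsupp
  refine ⟨M, fun c x => ?_⟩
  calc ‖x‖ * ‖fderiv ℝ (fun y => unitBump E (c • y)) x‖
      = ‖c • x‖ * ‖fderiv ℝ (unitBump E) (c • x)‖ := by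
        rw [fderiv_comp_smul, norm_smul, norm_smul]
        ring
    _ ≤ M := (le_abs_self _).trans (hM (c • x))

variable (E) in
lemma exists_norm_mul_norm_fderiv_annularCutoff_le :
    ∃ M : ℝ, ∀ (n : ℕ) (x : E), ‖x‖ * ‖fderiv ℝ (annularCutoff n) x‖ ≤ M := by
  obtain ⟨M, hM⟩ := exists_norm_mul_norm_fderiv_unitBump_le E
  refine ⟨M + M, fun n x => ?_⟩
  have hd (c : ℝ) : DifferentiableAt ℝ (fun y => unitBump E (c • y)) x :=
    (((unitBump E).contDiff (n := 1)).comp (contDiff_const_smul c)).differentiable one_ne_zero x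
  calc ‖x‖ * ‖fderiv ℝ (annularCutoff n) x‖
      ≤ ‖x‖ * (‖fderiv ℝ (fun y => unitBump E ((n + 1 : ℝ)⁻¹ • y)) x‖
          + ‖fderiv ℝ (fun y => unitBump E ((n + 1 : ℝ) • y)) x‖) := by
        gcongr
        unfold annularCutoff
        rw [fderiv_fun_sub (hd _) (hd _)]
        exact norm_sub_le _ _
    _ ≤ M + M := by
        rw [mul_add]
        exact add_le_add (hM _ x) (hM _ x)

lemma tendsto_integral_mul_annularCutoff [MeasurableSpace E] [BorelSpace E] {μ : Measure E}
    [NullSingletonClass μ] {w : E → ℝ} (hw : Integrable w μ) (c : ℝ) :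
    Tendsto (fun n => ∫ x, w x *
      ((‖x‖ * ‖fderiv ℝ (annularCutoff n) x‖) ^ 2 - c * annularCutoff n x ^ 2) ∂μ)
      atTop (𝓝 (-c * ∫ x, w x ∂μ)) := by
  obtain ⟨M, hM⟩ := exists_norm_mul_norm_fderiv_annularCutoff_le E
  have hcont (n : ℕ) : Continuous fun x : E =>
      (‖x‖ * ‖fderiv ℝ (annularCutoff n) x‖) ^ 2 - c * annularCutoff n x ^ 2 := by
    have hC : ContDiff ℝ 1 (annularCutoff n : E → ℝ) := contDiff_annularCutoff n
    have := hC.continuous_fderiv one_ne_zero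
    have := hC.continuous
    fun_prop
  have hbound (n : ℕ) (x : E) :
      ‖(‖x‖ * ‖fderiv ℝ (annularCutoff n) x‖) ^ 2 - c * annularCutoff n x ^ 2‖ ≤ M ^ 2 + |c| := by
    refine (norm_sub_le _ _).trans (add_le_add ?_ ?_)
    · rw [norm_pow, Real.norm_of_nonneg (by positivity)]
      exact pow_le_pow_left₀ (by positivity) (hM n x) 2
    · rw [norm_mul, norm_pow, Real.norm_eq_abs, Real.norm_eq_abs]
      exact mul_le_of_le_one_right (abs_nonneg c)
        (pow_le_one₀ (abs_nonneg _) (abs_annularCutoff_le_one n x))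
  rw [mul_comm, ← integral_mul_const]
  refine tendsto_integral_of_dominated_convergence (fun x => ‖w x‖ * (M ^ 2 + |c|))
    (fun n => hw.1.mul (hcont n).aestronglyMeasurable) (hw.norm.mul_const _)
    (fun n => .of_forall fun x => ?_) ?_
  · rw [norm_mul]
    exact mul_le_mul_of_nonneg_left (hbound n x) (norm_nonneg _)
  · filter_upwards [compl_mem_ae_iff.2 (measure_singleton (μ := μ) (0 : E))] with x hx
    refine tendsto_nhds_of_eventually_eq ?_
    filter_upwards [eventually_annularCutoff_eventuallyEq_one hx] with n hn
    simp [hn.fderiv_eq, hn.eq_of_nhds, Pi.one_def]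

end AnnularCutoff

section NegativeDirection

variable {N : ℕ} {ω p : ℝ} {u : EuclideanSpace ℝ (Fin N) → ℝ}

lemma integral_weighted_gradsq_div_norm_sq_pos (hu : ContDiff ℝ 1 u) (hrad : IsRadial u)
    (hne : ∃ x y, u x ≠ u y)
    (hint : Integrable fun x => (1 + 2 * u x ^ 2) * gradsq u x / ‖x‖ ^ 2) :
    0 < ∫ x, (1 + 2 * u x ^ 2) * gradsq u x / ‖x‖ ^ 2 := by
  simp only [gradsq_eq_norm_fderiv_sq] at hint ⊢
  have hnonneg (x : EuclideanSpace ℝ (Fin N)) :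
      0 ≤ (1 + 2 * u x ^ 2) * ‖fderiv ℝ u x‖ ^ 2 / ‖x‖ ^ 2 := by
    positivity
  have hsupport : Function.support (fderiv ℝ u) ⊆
      Function.support fun x => (1 + 2 * u x ^ 2) * ‖fderiv ℝ u x‖ ^ 2 / ‖x‖ ^ 2 := by
    intro x hx
    have hx0 : x ≠ 0 := by
      rintro rfl
      exact hx hrad.fderiv_zero
    have := norm_pos_iff.2 hx
    have := norm_pos_iff.2 hx0
    exact (show 0 < (1 + 2 * u x ^ 2) * ‖fderiv ℝ u x‖ ^ 2 / ‖x‖ ^ 2 by positivity).ne'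
  have hnonempty : (Function.support (fderiv ℝ u)).Nonempty := by
    obtain ⟨x, y, hxy⟩ := hne
    by_contra hempty
    have hzero := Function.support_eq_empty_iff.1 (Set.not_nonempty_iff_eq_empty.1 hempty)
    exact hxy (is_const_of_fderiv_eq_zero (hu.differentiable one_ne_zero) (congrFun hzero) x y)
  have hopen : IsOpen (Function.support (fderiv ℝ u)) :=
    (hu.continuous_fderiv one_ne_zero).isOpen_support
  rw [integral_pos_iff_support_of_nonneg hnonneg hint]
  exact (hopen.measure_pos volume hnonempty).trans_le (measure_mono hsupport)

lemma exists_integral_Lplus_mul_self_neg (hN : 2 ≤ N) (hu : ContDiff ℝ (⊤ : ℕ∞) u)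
    (hrad : IsRadial u) (hker : ∀ i x, Lplus ω p u (pd i u) x = 0) (hne : ∃ x y, u x ≠ u y)
    (hint : Integrable fun x => (1 + 2 * u x ^ 2) * gradsq u x / ‖x‖ ^ 2) :
    ∃ ξ : EuclideanSpace ℝ (Fin N) → ℝ, ContDiff ℝ (⊤ : ℕ∞) ξ ∧ HasCompactSupport ξ ∧
      ∫ x, Lplus ω p u ξ x * ξ x < 0 := by
  have : Nonempty (Fin N) := ⟨⟨0, by lia⟩⟩
  have hN' : (2 : ℝ) ≤ N := by exact_mod_cast hN
  have hlimit : -((N : ℝ) - 1) * ∫ x, (1 + 2 * u x ^ 2) * gradsq u x / ‖x‖ ^ 2 < 0 :=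
    mul_neg_of_neg_of_pos (by linarith)
      (integral_weighted_gradsq_div_norm_sq_pos (hu.of_le (by simp)) hrad hne hint)
  obtain ⟨n, hn⟩ := ((tendsto_integral_mul_annularCutoff hint _).eventually_lt_const hlimit).exists
  have hφ0 := zero_notMem_tsupport_annularCutoff (E := EuclideanSpace ℝ (Fin N)) n
  refine ⟨fun x => annularCutoff n x * radialDeriv u x,
    contDiff_mul_of_forall_mem_tsupport (contDiff_annularCutoff n) fun x hx =>
      contDiffAt_radialDeriv hu.contDiffAt (by simp) (ne_of_mem_of_not_mem hx hφ0),
    (hasCompactSupport_annularCutoff n).mul_right, ?_⟩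
  rwa [integral_Lplus_mul_radialDeriv (hu.of_le ENat.LEInfty.out) hrad hker hint
    (contDiff_annularCutoff n) (hasCompactSupport_annularCutoff n) hφ0]

lemma exists_normalized_integral_Lplus_mul_self_neg {ξ : EuclideanSpace ℝ (Fin N) → ℝ}
    (hξ : ContDiff ℝ (⊤ : ℕ∞) ξ) (hc : HasCompactSupport ξ)
    (hneg : ∫ x, Lplus ω p u ξ x * ξ x < 0) :
    ∃ ζ : EuclideanSpace ℝ (Fin N) → ℝ, ContDiff ℝ (⊤ : ℕ∞) ζ ∧ HasCompactSupport ζ ∧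
      (∫ x, ζ x ^ 2 = 1) ∧ (∫ x, Lplus ω p u ζ x * ζ x) < 0 := by
  have hmass : 0 < ∫ x, ξ x ^ 2 := by
    obtain ⟨x, hx⟩ : ∃ x, ξ x ≠ 0 := by
      by_contra! hzero
      simp [hzero] at hneg
    exact (hξ.continuous.pow 2).integral_pos_of_hasCompactSupport_nonneg_nonzero
      (hc.comp_left (zero_pow two_ne_zero)) (fun y => sq_nonneg (ξ y)) (pow_ne_zero 2 hx)
  refine ⟨fun x => (√(∫ x, ξ x ^ 2))⁻¹ * ξ x, contDiff_const.mul hξ, hc.mul_left, ?_, ?_⟩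
  · simp only [mul_pow, integral_const_mul, inv_pow, sq_sqrt hmass.le]
    exact inv_mul_cancel₀ hmass.ne'
  · simp only [Lplus_const_mul, mul_mul_mul_comm _ (Lplus ω p u ξ _), integral_const_mul]
    exact mul_neg_of_pos_of_neg (by positivity) hneg

end NegativeDirection

section ExponentialDecay

variable {E : Type*} [NormedAddCommGroup E] [NormedSpace ℝ E]

lemma integrable_exp_neg_mul_norm [FiniteDimensional ℝ E] [MeasurableSpace E] [BorelSpace E]
    {μ : Measure E} [μ.HasTemperateGrowth] {c : ℝ} (hc : 0 < c) :
    Integrable (fun x : E => Real.exp (-c * ‖x‖)) μ := by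
  have hpow (l : ℕ) (x : E) : ‖x‖ ^ l * ‖Real.exp (-c * ‖x‖)‖ ≤ l.factorial / c ^ l := by
    have h := Real.pow_div_factorial_le_exp (c * ‖x‖) (by positivity) l
    rw [div_le_iff₀ (by positivity), mul_pow] at h
    rw [Real.norm_of_nonneg (Real.exp_nonneg _), neg_mul, Real.exp_neg, ← div_eq_mul_inv,
      div_le_div_iff₀ (Real.exp_pos _) (by positivity)]
    linarith
  have hbound (x : E) : ‖Real.exp (-c * ‖x‖)‖ ≤ 1 := by
    simpa using hpow 0 x
  simpa using integrable_of_le_of_pow_mul_le (k := 0) (μ := μ) hbound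
    (fun x => by simpa using hpow _ x) (by fun_prop)

lemma exists_norm_fderiv_le_mul_norm_mul_exp {f : E → ℝ} (hf : ContDiff ℝ 2 f)
    (hf₀ : fderiv ℝ f 0 = 0) {C₁ C₂ δ : ℝ} (hδ : 0 ≤ δ)
    (h₁ : ∀ x, ‖fderiv ℝ f x‖ ≤ C₁ * Real.exp (-δ * ‖x‖))
    (h₂ : ∀ x, ‖fderiv ℝ (fderiv ℝ f) x‖ ≤ C₂) :
    ∃ K, ∀ x, ‖fderiv ℝ f x‖ ≤ K * (‖x‖ * Real.exp (-δ * ‖x‖)) := by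
  have hC₁ : 0 ≤ C₁ := by simpa using (norm_nonneg _).trans (h₁ 0)
  have hC₂ : 0 ≤ C₂ := (norm_nonneg (fderiv ℝ (fderiv ℝ f) 0)).trans (h₂ 0)
  refine ⟨max C₁ (C₂ * Real.exp δ), fun x => ?_⟩
  rcases le_total 1 ‖x‖ with hx | hx
  · calc ‖fderiv ℝ f x‖ ≤ C₁ * Real.exp (-δ * ‖x‖) := h₁ x
      _ ≤ C₁ * (‖x‖ * Real.exp (-δ * ‖x‖)) := by
        gcongr
        exact le_mul_of_one_le_left (Real.exp_nonneg _) hx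
      _ ≤ _ := by gcongr; exact le_max_left _ _
  · have hmean := convex_univ.norm_image_sub_le_of_norm_fderiv_le (𝕜 := ℝ)
      (fun y _ => (hf.fderiv_right (m := 1) (by norm_num)).differentiable one_ne_zero y)
      (fun y _ => h₂ y) (Set.mem_univ 0) (Set.mem_univ x)
    rw [hf₀, sub_zero, sub_zero] at hmean
    calc ‖fderiv ℝ f x‖ ≤ C₂ * ‖x‖ := hmean
      _ ≤ C₂ * Real.exp δ * (‖x‖ * Real.exp (-δ * ‖x‖)) := by
        have hexp : 1 ≤ Real.exp δ * Real.exp (-δ * ‖x‖) := by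
          rw [← Real.exp_add, Real.one_le_exp_iff]
          nlinarith
        calc C₂ * ‖x‖ ≤ C₂ * ‖x‖ * (Real.exp δ * Real.exp (-δ * ‖x‖)) :=
              le_mul_of_one_le_right (by positivity) hexp
          _ = _ := by ring
      _ ≤ _ := by gcongr; exact le_max_right _ _

end ExponentialDecay

namespace IsGroundState

variable {N : ℕ} {ω p : ℝ} {u : EuclideanSpace ℝ (Fin N) → ℝ}

lemma isRadial (hu : IsGroundState N ω p u) : IsRadial u := by
  obtain ⟨U, -, -, hU⟩ := hu.radial
  intro x y hxy
  rw [hU, hU, hxy]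

lemma exists_ne (hu : IsGroundState N ω p u) (hN : 0 < N) : ∃ x y, u x ≠ u y := by
  obtain ⟨U, hanti, -, hU⟩ := hu.radial
  refine ⟨0, EuclideanSpace.single ⟨0, hN⟩ 1, ?_⟩
  simpa [hU] using (hanti Set.self_mem_Ici (Set.mem_Ici.2 zero_le_one) one_pos).ne'

lemma exists_norm_iteratedFDeriv_le (hu : IsGroundState N ω p u) (k : ℕ) :
    ∃ C, ∀ x, ‖iteratedFDeriv ℝ k u x‖ ≤ C := by
  obtain ⟨C, hC, δ, hδ, hdecay⟩ := hu.decay k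
  refine ⟨C, fun x => (hdecay x).trans (mul_le_of_le_one_right hC.le (Real.exp_le_one_iff.2 ?_))⟩
  exact mul_nonpos_of_nonpos_of_nonneg (neg_nonpos.2 hδ.le) (norm_nonneg x)

lemma exists_gradsq_div_norm_sq_le (hu : IsGroundState N ω p u) :
    ∃ K, ∃ δ > 0, ∀ x, gradsq u x / ‖x‖ ^ 2 ≤ K ^ 2 * Real.exp (-δ * ‖x‖) := by
  obtain ⟨C₁, -, δ, hδ, h₁⟩ := hu.decay 1
  obtain ⟨C₂, h₂⟩ := hu.exists_norm_iteratedFDeriv_le 2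
  simp only [norm_iteratedFDeriv_one] at h₁
  obtain ⟨K, hK⟩ := exists_norm_fderiv_le_mul_norm_mul_exp
    (hu.smooth.of_le ENat.LEInfty.out) hu.isRadial.fderiv_zero hδ.le h₁ fun x => by
      rw [← norm_iteratedFDeriv_one, norm_iteratedFDeriv_fderiv]
      exact h₂ x
  refine ⟨K, 2 * δ, by positivity, fun x => ?_⟩
  refine div_le_of_le_mul₀ (by positivity) (by positivity) ?_
  calc gradsq u x ≤ (K * (‖x‖ * Real.exp (-δ * ‖x‖))) ^ 2 := by
        rw [gradsq_eq_norm_fderiv_sq]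
        exact pow_le_pow_left₀ (norm_nonneg _) (hK x) 2
    _ = K ^ 2 * Real.exp (-(2 * δ) * ‖x‖) * ‖x‖ ^ 2 := by
        rw [show -(2 * δ) * ‖x‖ = -δ * ‖x‖ + -δ * ‖x‖ by ring, Real.exp_add]
        ring

lemma integrable_weighted_gradsq_div_norm_sq (hu : IsGroundState N ω p u) :
    Integrable fun x => (1 + 2 * u x ^ 2) * gradsq u x / ‖x‖ ^ 2 := by
  obtain ⟨K, δ, hδ, hgrad⟩ := hu.exists_gradsq_div_norm_sq_le
  obtain ⟨C, hC⟩ := hu.exists_norm_iteratedFDeriv_le 0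
  simp only [norm_iteratedFDeriv_zero, Real.norm_eq_abs] at hC
  simp only [gradsq_eq_norm_fderiv_sq] at hgrad ⊢
  have hmeas : Measurable fun x => (1 + 2 * u x ^ 2) * ‖fderiv ℝ u x‖ ^ 2 / ‖x‖ ^ 2 := by
    have := hu.smooth.continuous.measurable
    fun_prop
  refine ((integrable_exp_neg_mul_norm hδ).const_mul ((1 + 2 * C ^ 2) * K ^ 2)).mono'
    hmeas.aestronglyMeasurable (.of_forall fun x => ?_)
  have hweight : 1 + 2 * u x ^ 2 ≤ 1 + 2 * C ^ 2 := by
    gcongr 1 + 2 * ?_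
    exact sq_le_sq' (neg_le_of_abs_le (hC x)) (le_of_abs_le (hC x))
  rw [Real.norm_of_nonneg (by positivity), mul_div_assoc, mul_assoc]
  exact mul_le_mul hweight (hgrad x) (by positivity) (by positivity)

end IsGroundState

theorem stmt5_general {N : ℕ} (hN : 2 ≤ N) {ω p : ℝ} {u : EuclideanSpace ℝ (Fin N) → ℝ}
    (hu : ContDiff ℝ (⊤ : ℕ∞) u) (hpos : ∀ x, 0 < u x) (hrad : IsRadial u)
    (hsol : ∀ x, -lap u x - u x * lap (fun y => (u y) ^ 2) x + ω * u x - (u x) ^ p = 0)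
    (hne : ∃ x y, u x ≠ u y)
    (hint : Integrable fun x => (1 + 2 * u x ^ 2) * gradsq u x / ‖x‖ ^ 2) :
    ∃ ξ : EuclideanSpace ℝ (Fin N) → ℝ, ContDiff ℝ (⊤ : ℕ∞) ξ ∧ HasCompactSupport ξ ∧
      (∫ x, (ξ x) ^ 2 = 1) ∧ (∫ x, Lplus ω p u ξ x * ξ x) < 0 := by
  have hker := Lplus_pd_eq_zero (hu.of_le ENat.LEInfty.out) hpos hsol
  obtain ⟨ξ, hξ, hξc, hneg⟩ := exists_integral_Lplus_mul_self_neg hN hu hrad hker hne hint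
  exact exists_normalized_integral_Lplus_mul_self_neg hξ hξc hneg

/-- The quadratic form of `L₊` takes a negative value on a normalized smooth compactly
supported function; in particular `μ₁ = inf σ(L₊) < 0`. -/
theorem stmt5 (N : ℕ) (hN : 2 ≤ N) (ω p : ℝ) (hω : 0 < ω) (hp : 1 < p)
    (hpmax : 3 ≤ N → p < (3 * (N : ℝ) + 2) / ((N : ℝ) - 2))
    (u : EuclideanSpace ℝ (Fin N) → ℝ) (hu : IsGroundState N ω p u) :
    ∃ ξ : EuclideanSpace ℝ (Fin N) → ℝ, ContDiff ℝ (⊤ : ℕ∞) ξ ∧ HasCompactSupport ξ ∧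
      (∫ x, (ξ x) ^ 2 = 1) ∧ (∫ x, Lplus ω p u ξ x * ξ x) < 0 := by
  exact stmt5_general hN hu.smooth hu.pos hu.isRadial hu.solves (hu.exists_ne (by lia))
    hu.integrable_weighted_gradsq_div_norm_sq

end
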